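/- Let G be a finite abelian group such that the difference graph D(G) has at least one vertex. Then the domination number of D(G) equals 1 if and only if G is isomorphic to Z_2 × (Z_q)^n, where q is an odd prime and n is a positive integer. -/

import Mathlib

/-- Adjacency in the difference of the enhanced power graph and the power graph:
`⟨x, y⟩` is cyclic but neither of `x`, `y` is a power of the other. -/
def diffAdj {G : Type*} [Group G] (x y : G) : Prop :=
  IsCyclic (Subgroup.closure ({x, y} : Set G)) ∧
    (¬ ∃ k : ℤ, y = x ^ k) ∧ (¬ ∃ k : ℤ, x = y ^ k)

/-- The vertex set of the difference graph `𝒟(G)`: the elements of `G` that are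
non-isolated in the difference of the enhanced power graph and the power graph. -/
abbrev DiffVertex (G : Type*) [Group G] := {x : G // ∃ y, diffAdj x y}

/-- The difference graph `𝒟(G)` of a group `G`. -/
def diffGraph (G : Type*) [Group G] : SimpleGraph (DiffVertex G) :=
  SimpleGraph.fromRel (fun a b => diffAdj a.val b.val)

/-- A dominating set of a graph: every vertex is in `S` or adjacent to a vertex of `S`. -/
def IsDominatingSet {V : Type*} (Γ : SimpleGraph V) (S : Set V) : Prop :=
  ∀ v : V, v ∈ S ∨ ∃ u ∈ S, Γ.Adj u v

/-- The domination number of a graph: the least size of a dominating set. -/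
noncomputable def dominationNumber {V : Type*} (Γ : SimpleGraph V) : ℕ :=
  sInf {n : ℕ | ∃ S : Set V, IsDominatingSet Γ S ∧ S.ncard = n}

/-- A maximal cyclic subgroup: a cyclic subgroup not properly contained in
another cyclic subgroup. -/
def IsMaxCyclic {G : Type*} [Group G] (C : Subgroup G) : Prop :=
  IsCyclic C ∧ ∀ D : Subgroup G, IsCyclic D → C ≤ D → C = D

/-!
Domination number one means that some vertex `t` is adjacent to every other vertex. Since `t⁻¹` is
then a vertex as well, but a power of `t`, the vertex `t` is an involution. In a cyclic group `x` is
a power of `y` as soon as the order of `x` divides that of `y`, so no vertex of even order other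
than `t` can be adjacent to `t`: every vertex of even order equals `t`.

Let `c` have order `exponent G`. Two powers of `c` whose orders do not divide one another are
adjacent, so an even divisor of `exponent G` that is incomparable to another divisor must be `2`.
With an odd prime `q` dividing `exponent G = 2 * q * k`, the pair `(4, q)` excludes even `k` and the
pair `(2 * q, q * k)` excludes odd `k > 1`, whence `exponent G = 2 * q`. Any further involution
would be adjacent to an element of order `q`, hence would be a vertex and equal `t`.

Conversely, if `exponent G = 2 * q` and `t` is the only involution, then all other vertices have
order `q` and are adjacent to `t`. Such groups split as the product of their kernels of squaring
and of the `q`-th power, the first of order two and the second a vector space over `ZMod q`.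
-/

section DominationNumber

variable {V : Type*} {Γ : SimpleGraph V}

theorem isDominatingSet_singleton_iff {v : V} : IsDominatingSet Γ {v} ↔ Γ.IsUniversal v := by
  simp only [IsDominatingSet, SimpleGraph.IsUniversal, Set.mem_singleton_iff, exists_eq_left,
    or_iff_not_imp_left, ne_comm (a := v), ne_eq]

theorem dominationNumber_eq_one_iff [Finite V] :
    dominationNumber Γ = 1 ↔ ∃ v, Γ.IsUniversal v := by
  simp only [← isDominatingSet_singleton_iff]
  constructor
  · intro h
    obtain ⟨S, hS, hcard⟩ := Nat.sInf_mem (Nat.nonempty_of_sInf_eq_succ h)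
    obtain ⟨v, rfl⟩ := Set.ncard_eq_one.mp (hcard.trans h)
    exact ⟨v, hS⟩
  · rintro ⟨v, hv⟩
    have hmem : 1 ∈ {n | ∃ S, IsDominatingSet Γ S ∧ S.ncard = n} :=
      ⟨{v}, hv, Set.ncard_singleton v⟩
    refine (Nat.sInf_le hmem).antisymm (le_csInf ⟨1, hmem⟩ ?_)
    rintro _ ⟨S, hS, rfl⟩
    have hSne : S.Nonempty := (hS v).elim (fun h ↦ ⟨v, h⟩) fun ⟨u, hu, _⟩ ↦ ⟨u, hu⟩
    exact hSne.ncard_pos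

end DominationNumber

section Cyclic

theorem mem_zpowers_of_orderOf_dvd {C : Type*} [Group C] [IsCyclic C] [Finite C] {x y : C}
    (h : orderOf x ∣ orderOf y) : x ∈ Subgroup.zpowers y := by
  let : CommGroup C := IsCyclic.commGroup
  let K : Subgroup C := (powMonoidHom (orderOf y)).ker
  have hle : Subgroup.zpowers y ≤ K := Subgroup.zpowers_le.mpr (pow_orderOf_eq_one y)
  have hcard : Nat.card K ≤ Nat.card (Subgroup.zpowers y) := by
    rw [IsCyclic.card_powMonoidHom_ker, Nat.card_zpowers]
    exact Nat.gcd_le_right _ (orderOf_pos y)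
  rw [Subgroup.eq_of_le_of_card_ge hle hcard]
  exact orderOf_dvd_iff_pow_eq_one.mp h

variable {G : Type*} [Group G] {x y z : G}

theorem isCyclic_closure_pair (hx : x ∈ Subgroup.zpowers z) (hy : y ∈ Subgroup.zpowers z) :
    IsCyclic (Subgroup.closure {x, y}) :=
  Subgroup.isCyclic_of_le <| (Subgroup.closure_le (Subgroup.zpowers z)).mpr <|
    Set.pair_subset hx hy

theorem mem_zpowers_mul_of_coprime (hcomm : Commute x y)
    (hcop : (orderOf x).Coprime (orderOf y)) : x ∈ Subgroup.zpowers (x * y) := by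
  have hpow : (x * y) ^ orderOf y = x ^ orderOf y := by
    rw [hcomm.mul_pow, pow_orderOf_eq_one, mul_one]
  have hle : Subgroup.zpowers (x ^ orderOf y) ≤ Subgroup.zpowers (x * y) :=
    hpow ▸ Subgroup.zpowers_le.mpr (Subgroup.npow_mem_zpowers _ _)
  exact hle (mem_zpowers_pow_iff.mpr hcop.symm)

theorem isCyclic_closure_pair_of_coprime (hcomm : Commute x y)
    (hcop : (orderOf x).Coprime (orderOf y)) : IsCyclic (Subgroup.closure {x, y}) :=
  isCyclic_closure_pair (mem_zpowers_mul_of_coprime hcomm hcop)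
    (hcomm.eq ▸ mem_zpowers_mul_of_coprime hcomm.symm hcop.symm)

end Cyclic

section DiffAdj

variable {G : Type*} [Group G] {x y : G}

theorem diffAdj_comm : diffAdj x y ↔ diffAdj y x := by
  rw [diffAdj, diffAdj, Set.pair_comm, and_comm (a := ¬ ∃ k : ℤ, y = x ^ k)]

theorem diffAdj.ne (h : diffAdj x y) : x ≠ y := by
  rintro rfl
  exact h.2.1 ⟨1, (zpow_one x).symm⟩

theorem diffGraph_adj {a b : DiffVertex G} : (diffGraph G).Adj a b ↔ diffAdj a.1 b.1 := by
  rw [diffGraph, SimpleGraph.fromRel_adj, diffAdj_comm (x := b.1), or_self, and_iff_right_iff_imp]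
  exact fun h ↦ mt (congrArg Subtype.val) h.ne

theorem diffAdj_inv_left : diffAdj x⁻¹ y ↔ diffAdj x y := by
  have hclosure : Subgroup.closure {x⁻¹, y} = Subgroup.closure {x, y} := by
    simp only [Set.insert_eq, Subgroup.closure_union, Subgroup.closure_singleton_inv]
  have hpow : (∃ k : ℤ, y = x⁻¹ ^ k) ↔ ∃ k : ℤ, y = x ^ k :=
    (Equiv.neg ℤ).exists_congr fun k ↦ by simp
  have hinv : (∃ k : ℤ, x⁻¹ = y ^ k) ↔ ∃ k : ℤ, x = y ^ k :=
    (Equiv.neg ℤ).exists_congr fun k ↦ by simp [inv_eq_iff_eq_inv]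
  rw [diffAdj, diffAdj, hclosure, hpow, hinv]

theorem diffAdj_of_not_orderOf_dvd (hcyc : IsCyclic (Subgroup.closure {x, y}))
    (hxy : ¬ orderOf x ∣ orderOf y) (hyx : ¬ orderOf y ∣ orderOf x) : diffAdj x y := by
  refine ⟨hcyc, ?_, ?_⟩
  · rintro ⟨k, rfl⟩
    exact hyx (orderOf_dvd_of_mem_zpowers (Subgroup.zpow_mem_zpowers x k))
  · rintro ⟨k, rfl⟩
    exact hxy (orderOf_dvd_of_mem_zpowers (Subgroup.zpow_mem_zpowers y k))

theorem diffAdj_of_coprime (hcomm : Commute x y) (hcop : (orderOf x).Coprime (orderOf y))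
    (hx : x ≠ 1) (hy : y ≠ 1) : diffAdj x y :=
  diffAdj_of_not_orderOf_dvd (isCyclic_closure_pair_of_coprime hcomm hcop)
    (fun h ↦ hx (orderOf_eq_one_iff.mp (hcop.eq_one_of_dvd h)))
    (fun h ↦ hy (orderOf_eq_one_iff.mp (hcop.symm.eq_one_of_dvd h)))

theorem diffAdj_pow_orderOf_div {c : G} {d e : ℕ} (hc : orderOf c ≠ 0) (hd : d ∣ orderOf c)
    (he : e ∣ orderOf c) (hde : ¬ d ∣ e) (hed : ¬ e ∣ d) :
    diffAdj (c ^ (orderOf c / d)) (c ^ (orderOf c / e)) := by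
  apply diffAdj_of_not_orderOf_dvd
    (isCyclic_closure_pair (Subgroup.npow_mem_zpowers _ _) (Subgroup.npow_mem_zpowers _ _)) <;>
  simpa only [orderOf_pow_orderOf_div hc hd, orderOf_pow_orderOf_div hc he]

theorem diffAdj.not_orderOf_dvd [Finite G] (h : diffAdj x y) : ¬ orderOf x ∣ orderOf y := by
  intro hdvd
  obtain ⟨hcyc, -, hpow⟩ := h
  let x' : Subgroup.closure {x, y} := ⟨x, Subgroup.mem_closure_of_mem (by simp)⟩
  let y' : Subgroup.closure {x, y} := ⟨y, Subgroup.mem_closure_of_mem (by simp)⟩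
  have hdvd' : orderOf x' ∣ orderOf y' := by simpa only [x', y', Subgroup.orderOf_mk] using hdvd
  obtain ⟨k, hk⟩ := mem_zpowers_of_orderOf_dvd hdvd'
  exact hpow ⟨k, (congrArg Subtype.val hk).symm⟩

theorem diffAdj.orderOf_eq_or_eq_of_exponent_eq_mul [Finite G] {p q : ℕ} (hp : p.Prime)
    (hq : q.Prime) (hexp : Monoid.exponent G = p * q) (h : diffAdj x y) :
    orderOf x = p ∨ orderOf x = q := by
  obtain ⟨a, ha, b, hb, hab⟩ : ∃ a, a ∣ p ∧ ∃ b, b ∣ q ∧ a * b = orderOf x := by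
    simpa only [exists_and_left] using Nat.dvd_mul.mp (hexp ▸ Monoid.order_dvd_exponent x)
  have hne_one : orderOf x ≠ 1 := fun h1 ↦ h.not_orderOf_dvd (h1 ▸ one_dvd _)
  have hne_exp : orderOf x ≠ p * q := fun hpq ↦
    (diffAdj_comm.mp h).not_orderOf_dvd (by rw [hpq, ← hexp]; exact Monoid.order_dvd_exponent y)
  rw [← hab] at hne_one hne_exp ⊢
  rcases (Nat.dvd_prime hp).mp ha with ha | ha <;>
    rcases (Nat.dvd_prime hq).mp hb with hb | hb <;>
    simp only [ha, hb, one_mul, mul_one, ne_eq, not_true_eq_false, true_or, or_true]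
      at hne_one hne_exp ⊢

end DiffAdj

theorem eq_two_mul_of_forall_even_dvd {N q : ℕ} (hq : q.Prime) (hodd : Odd q) (hN : 2 * q ∣ N)
    (h : ∀ d e, d ∣ N → e ∣ N → ¬ d ∣ e → ¬ e ∣ d → 2 ∣ d → d = 2) : N = 2 * q := by
  obtain ⟨k, rfl⟩ := hN
  suffices k = 1 by rw [this, mul_one]
  by_cases hk : 2 ∣ k
  · obtain ⟨l, rfl⟩ := hk
    have h4q : ¬ 4 ∣ q := fun h4 ↦ hodd.not_two_dvd_nat (dvd_trans ⟨2, rfl⟩ h4)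
    have hq4 : ¬ q ∣ 4 := fun h4 ↦
      hq.ne_one ((hodd.coprime_two_right.pow_right 2).eq_one_of_dvd h4)
    exact absurd (h 4 q ⟨q * l, by ring⟩ ⟨4 * l, by ring⟩ h4q hq4 ⟨2, rfl⟩) (by norm_num)
  · by_contra hk1
    have h2k : ¬ q * 2 ∣ q * k := fun h2 ↦ hk (Nat.dvd_of_mul_dvd_mul_left hq.pos h2)
    have hk2 : ¬ q * k ∣ q * 2 := fun h2 ↦
      (Nat.dvd_prime Nat.prime_two).mp (Nat.dvd_of_mul_dvd_mul_left hq.pos h2) |>.elim hk1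
        fun hk2 ↦ hk hk2.symm.dvd
    have hq2 := h (q * 2) (q * k) ⟨k, by ring⟩ ⟨2, by ring⟩ h2k hk2 ⟨q, mul_comm q 2⟩
    exact hq.ne_one (by omega)

section UniversalVertex

variable {G : Type*}

theorem orderOf_eq_two_of_isUniversal [Group G] {t : DiffVertex G}
    (ht : (diffGraph G).IsUniversal t) : orderOf t.1 = 2 := by
  obtain ⟨t, u, htu⟩ := t
  refine orderOf_eq_prime ?_ ?_
  · by_contra hsq
    have hinv : t ≠ t⁻¹ := fun h ↦ hsq (by rw [pow_two, mul_eq_one_iff_eq_inv, ← h])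
    have hadj := ht (w := ⟨t⁻¹, u, diffAdj_inv_left.mpr htu⟩) (mt (congrArg Subtype.val) hinv)
    exact (diffGraph_adj.mp hadj).2.1 ⟨-1, (zpow_neg_one t).symm⟩
  · rintro rfl
    exact htu.2.2 ⟨0, (zpow_zero u).symm⟩

theorem eq_of_isUniversal_of_two_dvd_orderOf [Group G] [Finite G] {t : DiffVertex G}
    (ht : (diffGraph G).IsUniversal t) {x y : G} (hxy : diffAdj x y) (hx : 2 ∣ orderOf x) :
    x = t := by
  by_contra hne
  have hadj := diffGraph_adj.mp (ht (w := ⟨x, y, hxy⟩) fun h ↦ hne (h ▸ rfl))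
  exact hadj.not_orderOf_dvd (orderOf_eq_two_of_isUniversal ht ▸ hx)

variable [CommGroup G] [Finite G]

theorem exponent_eq_two_mul_of_isUniversal {t : DiffVertex G} (ht : (diffGraph G).IsUniversal t)
    {q : ℕ} (hq : q.Prime) (hodd : Odd q) (hqG : q ∣ Monoid.exponent G) :
    Monoid.exponent G = 2 * q := by
  obtain ⟨c, hc⟩ := Monoid.exists_orderOf_eq_exponent (.of_finite (G := G))
  rw [← hc] at hqG ⊢
  have htwo : 2 ∣ orderOf c := by
    rw [hc, ← orderOf_eq_two_of_isUniversal ht]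
    exact Monoid.order_dvd_exponent t.1
  refine eq_two_mul_of_forall_even_dvd hq hodd
    (hodd.coprime_two_left.mul_dvd_of_dvd_of_dvd htwo hqG) fun d e hd he hde hed heven ↦ ?_
  have hc0 : orderOf c ≠ 0 := (orderOf_pos c).ne'
  have hord := orderOf_pow_orderOf_div hc0 hd
  have hpow := eq_of_isUniversal_of_two_dvd_orderOf ht (diffAdj_pow_orderOf_div hc0 hd he hde hed)
    (hord.symm ▸ heven)
  rw [← hord, hpow, orderOf_eq_two_of_isUniversal ht]

theorem existsUnique_orderOf_eq_two_of_isUniversal {t : DiffVertex G}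
    (ht : (diffGraph G).IsUniversal t) {z : G} (hz : z ≠ 1) (hodd : Odd (orderOf z)) :
    ∃! s : G, orderOf s = 2 := by
  refine ⟨t, orderOf_eq_two_of_isUniversal ht, fun s hs ↦ ?_⟩
  have hs1 : s ≠ 1 := by
    rintro rfl
    simp at hs
  have hadj : diffAdj s z := diffAdj_of_coprime (.all s z) (hs ▸ hodd.coprime_two_left) hs1 hz
  exact eq_of_isUniversal_of_two_dvd_orderOf ht hadj hs.symm.dvd

theorem exists_isUniversal_diffGraph_iff :
    (∃ t, (diffGraph G).IsUniversal t) ↔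
      ∃ q : ℕ, q.Prime ∧ Odd q ∧ Monoid.exponent G = 2 * q ∧ ∃! t : G, orderOf t = 2 := by
  constructor
  · rintro ⟨t, ht⟩
    obtain ⟨u, htu⟩ := t.2
    have ht2 := orderOf_eq_two_of_isUniversal ht
    have hu_odd : Odd (orderOf u) := by
      rw [← Nat.not_even_iff_odd, even_iff_two_dvd, ← ht2]
      exact htu.not_orderOf_dvd
    have hu1 : orderOf u ≠ 1 := fun h ↦ (diffAdj_comm.mp htu).not_orderOf_dvd (h ▸ one_dvd _)
    obtain ⟨q, hq, hqu⟩ := Nat.exists_prime_and_dvd hu1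
    have hodd : Odd q := hu_odd.of_dvd_nat hqu
    exact ⟨q, hq, hodd,
      exponent_eq_two_mul_of_isUniversal ht hq hodd (hqu.trans (Monoid.order_dvd_exponent u)),
      existsUnique_orderOf_eq_two_of_isUniversal ht (mt orderOf_eq_one_iff.mpr hu1) hu_odd⟩
  · rintro ⟨q, hq, hodd, hexp, t, ht, huniq⟩
    have : Fact q.Prime := ⟨hq⟩
    have hadj {v : G} (hv : orderOf v = q) : diffAdj t v :=
      diffAdj_of_coprime (.all t v) (by rw [ht, hv]; exact hodd.coprime_two_left)
        (fun h ↦ by simp [h] at ht) fun h ↦ hq.ne_one (by rw [← hv, h, orderOf_one])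
    obtain ⟨z, hz⟩ := exists_prime_orderOf_dvd_card' (G := G) q
      ((Dvd.intro_left 2 hexp.symm).trans Group.exponent_dvd_nat_card)
    refine ⟨⟨t, z, hadj hz⟩, fun ⟨v, w, hvw⟩ hne ↦ diffGraph_adj.mpr (hadj ?_)⟩
    refine (hvw.orderOf_eq_or_eq_of_exponent_eq_mul Nat.prime_two hq hexp).resolve_left fun hv ↦ ?_
    exact hne (Subtype.ext (huniq v hv).symm)

end UniversalVertex

section Structure

theorem isComplement'_ker_powMonoidHom {G : Type*} [CommGroup G] {m n : ℕ} (hmn : m.Coprime n)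
    (h : ∀ g : G, g ^ (m * n) = 1) :
    (powMonoidHom m : G →* G).ker.IsComplement' (powMonoidHom n).ker := by
  apply Subgroup.isComplement'_of_disjoint_and_mul_eq_univ
  · rw [Subgroup.disjoint_def]
    exact fun hm hn ↦ (pow_eq_one_iff_of_coprime hmn).mp ⟨hm, hn⟩
  · refine Set.eq_univ_of_forall fun g ↦ ?_
    refine ⟨g ^ (n * m.gcdB n), ?_, g ^ (m * m.gcdA n), ?_, ?_⟩
    · rw [SetLike.mem_coe, MonoidHom.mem_ker, powMonoidHom_apply, ← zpow_natCast, ← zpow_mul,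
        mul_right_comm, mul_comm (n : ℤ), zpow_mul, ← Nat.cast_mul, zpow_natCast, h, one_zpow]
    · rw [SetLike.mem_coe, MonoidHom.mem_ker, powMonoidHom_apply, ← zpow_natCast, ← zpow_mul,
        mul_right_comm, zpow_mul, ← Nat.cast_mul, zpow_natCast, h, one_zpow]
    · change g ^ (n * m.gcdB n) * g ^ (m * m.gcdA n) = g
      rw [← zpow_add, add_comm, ← Nat.gcd_eq_gcd_ab, hmn, Nat.cast_one, zpow_one]

theorem exists_mulEquiv_pi_zmod {G : Type*} [CommGroup G] [Finite G] {p : ℕ} [Fact p.Prime]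
    (h : ∀ g : G, g ^ p = 1) : ∃ n, Nonempty (G ≃* (Fin n → Multiplicative (ZMod p))) := by
  have : Module (ZMod p) (Additive G) := AddCommGroup.zmodModule h
  let e := (Module.finBasis (ZMod p) (Additive G)).equivFun.toAddEquiv
  exact ⟨_, ⟨(AddEquiv.toMultiplicativeRight e).trans (.funMultiplicative _ _)⟩⟩

theorem ker_powMonoidHom_two_eq_zpowers {G : Type*} [CommGroup G] {t : G} (ht : orderOf t = 2)
    (huniq : ∀ s : G, orderOf s = 2 → s = t) :
    (powMonoidHom 2 : G →* G).ker = Subgroup.zpowers t := by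
  refine le_antisymm (fun s hs ↦ ?_) (Subgroup.zpowers_le.mpr (ht ▸ pow_orderOf_eq_one t))
  by_cases hs1 : s = 1
  · exact hs1 ▸ one_mem _
  · exact huniq s (orderOf_eq_prime hs hs1) ▸ Subgroup.mem_zpowers s

theorem exponent_pi_const {ι M : Type*} [Nonempty ι] [Monoid M] :
    Monoid.exponent (ι → M) = Monoid.exponent M := by
  refine Nat.dvd_antisymm (Monoid.exponent_dvd_of_forall_pow_eq_one fun f ↦ ?_) ?_
  · exact funext fun i ↦ Monoid.pow_exponent_eq_one (f i)
  · exact MonoidHom.exponent_dvd (f := Pi.evalMonoidHom (fun _ : ι ↦ M) (Classical.arbitrary ι))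
      (Function.surjective_eval _)

theorem existsUnique_orderOf_prod {A B : Type*} [Monoid A] [Monoid B] {k : ℕ}
    (hk : k.Coprime (Monoid.exponent B)) (hA : ∃! a : A, orderOf a = k) :
    ∃! p : A × B, orderOf p = k := by
  obtain ⟨a, ha, huniq⟩ := hA
  refine ⟨(a, 1), by simp [Prod.orderOf_mk, ha], ?_⟩
  rintro ⟨a', b⟩ hab
  rw [Prod.orderOf_mk] at hab
  have hb : b = 1 := orderOf_eq_one_iff.mp <|
    Nat.eq_one_of_dvd_coprimes hk (hab ▸ Nat.dvd_lcm_right _ _) (Monoid.order_dvd_exponent b)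
  subst hb
  rw [orderOf_one, Nat.lcm_one_right] at hab
  rw [huniq a' hab]

theorem exists_mulEquiv_of_exponent_eq_two_mul {G : Type*} [CommGroup G] [Finite G] {q : ℕ}
    (hq : q.Prime) (hodd : Odd q) (hexp : Monoid.exponent G = 2 * q)
    (hinv : ∃! t : G, orderOf t = 2) :
    ∃ n, 0 < n ∧
      Nonempty (G ≃* (Multiplicative (ZMod 2) × (Fin n → Multiplicative (ZMod q)))) := by
  have : Fact q.Prime := ⟨hq⟩
  obtain ⟨t, ht, huniq⟩ := hinv
  let T : Subgroup G := (powMonoidHom 2).ker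
  let Q : Subgroup G := (powMonoidHom q).ker
  have hT : T = Subgroup.zpowers t := ker_powMonoidHom_two_eq_zpowers ht huniq
  let eT : T ≃* Multiplicative (ZMod 2) :=
    mulEquivOfPrimeCardEq (p := 2) (by rw [hT, Nat.card_zpowers, ht]) (by simp)
  obtain ⟨n, ⟨eQ⟩⟩ := exists_mulEquiv_pi_zmod (G := Q) fun g ↦ Subtype.ext g.2
  have hcompl : T.IsComplement' Q := isComplement'_ker_powMonoidHom hodd.coprime_two_left
    fun g ↦ hexp ▸ Monoid.pow_exponent_eq_one g
  let e : T × Q ≃* G := MulEquiv.ofBijective (T.subtype.coprod Q.subtype) hcompl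
  let f := e.symm.trans (eT.prodCongr eQ)
  refine ⟨n, Nat.pos_of_ne_zero ?_, ⟨f⟩⟩
  rintro rfl
  rw [Monoid.exponent_eq_of_mulEquiv f, Monoid.exponent_prod, Monoid.exponent_multiplicative,
    ZMod.exponent, Monoid.exp_eq_one_of_subsingleton, lcm_one_right] at hexp
  exact hq.ne_one (by simpa using hexp.symm)

theorem existsUnique_orderOf_eq_two_zmod_two :
    ∃! a : Multiplicative (ZMod 2), orderOf a = 2 := by
  simp only [orderOf_eq_prime_iff]
  exact ⟨.ofAdd 1, by decide, by decide⟩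

theorem exponent_pi_zmod {q n : ℕ} (hn : 0 < n) :
    Monoid.exponent (Fin n → Multiplicative (ZMod q)) = q := by
  have : NeZero n := ⟨hn.ne'⟩
  rw [exponent_pi_const, Monoid.exponent_multiplicative, ZMod.exponent]

theorem exponent_eq_two_mul_and_existsUnique_iff {G : Type*} [CommGroup G] [Finite G] {q : ℕ}
    (hq : q.Prime) (hodd : Odd q) :
    (Monoid.exponent G = 2 * q ∧ ∃! t : G, orderOf t = 2) ↔
      ∃ n, 0 < n ∧
        Nonempty (G ≃* (Multiplicative (ZMod 2) × (Fin n → Multiplicative (ZMod q)))) := by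
  constructor
  · rintro ⟨hexp, hinv⟩
    exact exists_mulEquiv_of_exponent_eq_two_mul hq hodd hexp hinv
  · rintro ⟨n, hn, ⟨e⟩⟩
    constructor
    · rw [Monoid.exponent_eq_of_mulEquiv e, Monoid.exponent_prod, exponent_pi_zmod hn,
        Monoid.exponent_multiplicative, ZMod.exponent]
      exact hodd.coprime_two_left.lcm_eq_mul
    · rw [e.toEquiv.existsUnique_congr (q := fun p ↦ orderOf p = 2) fun g ↦ by simp]
      exact existsUnique_orderOf_prod ((exponent_pi_zmod hn).symm ▸ hodd.coprime_two_left)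
        existsUnique_orderOf_eq_two_zmod_two

end Structure

/-- Corollary 3.5: for a finite abelian group `G` whose difference graph has at least one
vertex, `γ(𝒟(G)) = 1` iff `G ≅ ℤ₂ × (ℤ_q)ⁿ` for some odd prime `q` and some `n ≥ 1`. -/
theorem abelian_domination_number_eq_one_iff
    (G : Type u) [CommGroup G] [Finite G] (hne : Nonempty (DiffVertex G)) :
    dominationNumber (diffGraph G) = 1 ↔
      ∃ (q n : ℕ), q.Prime ∧ Odd q ∧ 0 < n ∧
        Nonempty (G ≃* (Multiplicative (ZMod 2) × (Fin n → Multiplicative (ZMod q)))) := by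
  rw [dominationNumber_eq_one_iff, exists_isUniversal_diffGraph_iff]
  constructor
  · rintro ⟨q, hq, hodd, hG⟩
    obtain ⟨n, hn, e⟩ := (exponent_eq_two_mul_and_existsUnique_iff hq hodd).mp hG
    exact ⟨q, n, hq, hodd, hn, e⟩
  · rintro ⟨q, n, hq, hodd, hn, e⟩
    exact ⟨q, hq, hodd, (exponent_eq_two_mul_and_existsUnique_iff hq hodd).mpr ⟨n, hn, e⟩⟩
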